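/- For every d∈(0,1], the function φ̄_d belongs to U_d and is the unique minimizer of the energy J_d over U_d: J_d(φ̄_d)≤J_d(ψ) for every ψ∈U_d, with equality only if ψ=φ̄_d on [0,d]. -/

import Mathlib

open Real Set MeasureTheory

noncomputable section

/-- `φ` solves the boundary value problem `φ'' = f(φ)` on `(0,d)`, `φ(0) = 0`,
`φ(d) = Q`, `0 < φ < Q` on `(0,d)`, with `φ ∈ C²((0,d)) ∩ C¹([0,d])`. -/
def IsBVPSol (Q : ℝ) (f : ℝ → ℝ) (d : ℝ) (φ : ℝ → ℝ) : Prop :=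
  ContDiffOn ℝ 1 φ (Set.Icc 0 d) ∧ ContDiffOn ℝ 2 φ (Set.Ioo 0 d) ∧
  (∀ x ∈ Set.Ioo (0 : ℝ) d, deriv (deriv φ) x = f (φ x)) ∧
  φ 0 = 0 ∧ φ d = Q ∧ (∀ x ∈ Set.Ioo (0 : ℝ) d, 0 < φ x ∧ φ x < Q)

/-- `ψ ∈ U_d` with a.e. derivative `g`: `ψ` is absolutely continuous on `[0,d]`
(it is the indefinite integral of `g`, with `g ∈ L²(0,d)`), `ψ(0) = 0` (from the
representation) and `ψ(d) = Q`. -/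
def UdRep (Q d : ℝ) (ψ g : ℝ → ℝ) : Prop :=
  MeasureTheory.IntegrableOn (fun s => (g s) ^ 2) (Set.Icc (0 : ℝ) d) volume ∧
  (∀ x ∈ Set.Icc (0 : ℝ) d, ψ x = ∫ s in (0 : ℝ)..x, g s) ∧ ψ d = Q

/-- The energy `J_d(ψ) = ∫₀^d (|ψ'|²/2 + F(ψ))` computed with a.e. derivative `g`. -/
def Jd (F : ℝ → ℝ) (d : ℝ) (ψ g : ℝ → ℝ) : ℝ :=
  ∫ s in (0 : ℝ)..d, ((g s) ^ 2 / 2 + F (ψ s))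

/-- A Lipschitz function composed with an absolutely continuous one is absolutely continuous. -/
lemma LipschitzOnWith.comp_absolutelyContinuousOnInterval {Γ u : ℝ → ℝ} {K : NNReal} {a b : ℝ}
    {t : Set ℝ} (hΓ : LipschitzOnWith K Γ t) (hu : AbsolutelyContinuousOnInterval u a b)
    (ht : MapsTo u (uIcc a b) t) : AbsolutelyContinuousOnInterval (fun x => Γ (u x)) a b := by
  rw [absolutelyContinuousOnInterval_iff] at hu ⊢
  intro ε hε
  obtain ⟨δ, hδ, h⟩ := hu (ε / (K + 1)) (by positivity)
  refine ⟨δ, hδ, fun E hE hEδ => ?_⟩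
  have hlt := h E hE hEδ
  rw [lt_div_iff₀ (by positivity)] at hlt
  refine lt_of_le_of_lt ?_ hlt
  rw [Finset.sum_mul]
  refine Finset.sum_le_sum fun i hi => ?_
  have h1 := hΓ.dist_le_mul _ (ht (hE.1 i hi).1) _ (ht (hE.1 i hi).2)
  have h2 : 0 ≤ dist (u (E.2 i).1) (u (E.2 i).2) := dist_nonneg
  nlinarith

/-- Substitution `y = ∫ g` in an integral with continuous integrand, for integrable `g`. -/
lemma integral_comp_integral_mul {G g : ℝ → ℝ} {a b : ℝ} (hG : Continuous G)
    (hg : IntervalIntegrable g volume a b) :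
    ∫ x in a..b, G (∫ s in a..x, g s) * g x = ∫ y in (0 : ℝ)..(∫ s in a..b, g s), G y := by
  set u : ℝ → ℝ := fun x => ∫ s in a..x, g s with hu
  set Γ : ℝ → ℝ := fun y => ∫ t in (0 : ℝ)..y, G t with hΓ
  have hΓ' (y : ℝ) : HasDerivAt Γ (G y) y := hG.integral_hasStrictDerivAt 0 y |>.hasDerivAt
  have huac : AbsolutelyContinuousOnInterval u a b :=
    hg.absolutelyContinuousOnInterval_intervalIntegral left_mem_uIcc
  obtain ⟨R, hR⟩ := huac.exists_bound
  obtain ⟨C, hC⟩ := (isCompact_closedBall (0 : ℝ) R).exists_bound_of_continuousOn hG.continuousOn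
  have hlip : LipschitzOnWith C.toNNReal Γ (Metric.closedBall 0 R) := by
    refine Convex.lipschitzOnWith_of_nnnorm_hasDerivWithin_le (f' := G)
      (convex_closedBall 0 R) (fun y _ => (hΓ' y).hasDerivWithinAt) fun y hy => ?_
    rw [← NNReal.coe_le_coe, coe_nnnorm]
    exact (hC y hy).trans (Real.le_coe_toNNReal C)
  have hac : AbsolutelyContinuousOnInterval (fun x => Γ (u x)) a b :=
    hlip.comp_absolutelyContinuousOnInterval huac fun x hx => by simpa using hR x hx
  have hint := hac.integral_deriv_eq_sub
  have hcongr : ∫ x in a..b, G (u x) * g x = ∫ x in a..b, deriv (fun x => Γ (u x)) x := by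
    refine intervalIntegral.integral_congr_ae ?_
    filter_upwards [hg.ae_hasDerivAt_integral] with x hx hxab
    have hux : HasDerivAt u (g x) x := hx (uIoc_subset_uIcc hxab) a left_mem_uIcc
    exact ((hΓ' (u x)).comp x hux).deriv.symm
  rw [hcongr, hint]
  simp [hΓ, hu]

/-- Two solutions of `u' = G(u)` on `(0,d)` joining `0` to `Q` agree if `G ≥ 0`, `G > 0` on
`(0,Q)`, and one of them has values in `(0,Q)`. -/
lemma eqOn_of_hasDerivAt_autonomous {G φ ψ : ℝ → ℝ} {Q d : ℝ} (hQ : 0 < Q) (hd : 0 < d)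
    (hG : Continuous G) (hG0 : ∀ y, 0 ≤ G y) (hGpos : ∀ y ∈ Ioo 0 Q, 0 < G y)
    (hφc : ContinuousOn φ (Icc 0 d)) (hφ' : ∀ x ∈ Ioo 0 d, HasDerivAt φ (G (φ x)) x)
    (hφ0 : φ 0 = 0) (hφd : φ d = Q) (hφmem : ∀ x ∈ Ioo 0 d, φ x ∈ Ioo 0 Q)
    (hψc : ContinuousOn ψ (Icc 0 d)) (hψ' : ∀ x ∈ Ioo 0 d, HasDerivAt ψ (G (ψ x)) x)
    (hψ0 : ψ 0 = 0) (hψd : ψ d = Q) : EqOn ψ φ (Icc 0 d) := by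
  have hmono : MonotoneOn ψ (Icc 0 d) := by
    refine monotoneOn_of_deriv_nonneg (convex_Icc 0 d) hψc ?_ ?_
    · rw [interior_Icc]
      exact fun x hx => (hψ' x hx).differentiableAt.differentiableWithinAt
    · rw [interior_Icc]
      intro x hx
      rw [(hψ' x hx).deriv]
      exact hG0 _
  have h0mem : (0 : ℝ) ∈ Icc 0 d := left_mem_Icc.2 hd.le
  have hdmem : d ∈ Icc 0 d := right_mem_Icc.2 hd.le
  have hlevel (c : ℝ) : IsCompact (Icc 0 d ∩ ψ ⁻¹' {c}) :=
    isCompact_Icc.of_isClosed_subset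
      (hψc.preimage_isClosed_of_isClosed isClosed_Icc isClosed_singleton) inter_subset_left
  obtain ⟨a, ⟨ha, hψa⟩, hamax⟩ := (hlevel 0).exists_isGreatest ⟨0, h0mem, hψ0⟩
  obtain ⟨b, ⟨hb, hψb⟩, hbmin⟩ := (hlevel Q).exists_isLeast ⟨d, hdmem, hψd⟩
  simp only [mem_preimage, mem_singleton_iff] at hψa hψb
  have hab : a < b := by
    by_contra! h
    have := hmono hb ha h
    linarith
  have hψmem : ∀ x ∈ Ioo a b, ψ x ∈ Ioo 0 Q := by
    intro x hx
    have hxm : x ∈ Icc 0 d := ⟨ha.1.trans hx.1.le, hx.2.le.trans hb.2⟩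
    refine ⟨lt_of_le_of_ne (hψa ▸ hmono ha hxm hx.1.le) fun h => ?_,
      lt_of_le_of_ne (hψb ▸ hmono hxm hb hx.2.le) fun h => ?_⟩
    · exact hx.1.not_ge (hamax ⟨hxm, h.symm⟩)
    · exact hx.2.not_ge (hbmin ⟨hxm, h⟩)
  -- the time `T` spent between the levels `Q / 2` and `y`
  set T : ℝ → ℝ := fun y => ∫ t in (Q / 2)..y, (G t)⁻¹ with hT
  have hmid : Q / 2 ∈ Ioo 0 Q := ⟨by linarith, by linarith⟩
  have hGinv : ContinuousOn (fun t => (G t)⁻¹) (Ioo 0 Q) :=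
    hG.continuousOn.inv₀ fun y hy => (hGpos y hy).ne'
  have hT' : ∀ y ∈ Ioo 0 Q, HasDerivAt T (G y)⁻¹ y := by
    intro y hy
    refine intervalIntegral.integral_hasDerivAt_right ?_ ?_
      (hGinv.continuousAt (isOpen_Ioo.mem_nhds hy))
    · exact (hGinv.mono (ordConnected_Ioo.uIcc_subset hmid hy)).intervalIntegrable
    · exact hGinv.stronglyMeasurableAtFilter isOpen_Ioo y hy
  have hconst : ∀ (v : ℝ → ℝ) (l r : ℝ), (∀ x ∈ Ioo l r, HasDerivAt v (G (v x)) x) →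
      (∀ x ∈ Ioo l r, v x ∈ Ioo 0 Q) → ∃ c, ∀ x ∈ Ioo l r, T (v x) - x = c := by
    intro v l r hv hvm
    have hder : ∀ x ∈ Ioo l r, HasDerivAt (fun x => T (v x) - x) 0 x := by
      intro x hx
      have h := ((hT' (v x) (hvm x hx)).comp x (hv x hx)).sub (hasDerivAt_id x)
      rwa [inv_mul_cancel₀ (hGpos _ (hvm x hx)).ne', sub_self] at h
    exact isOpen_Ioo.exists_is_const_of_deriv_eq_zero isPreconnected_Ioo
      (fun x hx => (hder x hx).differentiableAt.differentiableWithinAt)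
      fun x hx => (hder x hx).deriv
  obtain ⟨c₁, hc₁⟩ := hconst φ 0 d hφ' hφmem
  obtain ⟨c₂, hc₂⟩ := hconst ψ a b
    (fun x hx => hψ' x ⟨ha.1.trans_lt hx.1, hx.2.trans_le hb.2⟩) hψmem
  set c := c₂ - c₁ with hc
  have hshift : ∀ x ∈ Ioo a b, x + c ∈ Ioo 0 d ∧ ψ x = φ (x + c) := by
    intro x hx
    have hm := hψmem x hx
    obtain ⟨y, hy, hyx⟩ := intermediate_value_Ioo hd.le hφc
      (show ψ x ∈ Ioo (φ 0) (φ d) by rwa [hφ0, hφd])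
    have h1 := hc₁ y hy
    have h2 := hc₂ x hx
    rw [hyx] at h1
    obtain rfl : y = x + c := by rw [hc]; linarith
    exact ⟨hy, hyx.symm⟩
  have hmaps : MapsTo (fun x => x + c) (Icc a b) (Icc 0 d) := by
    rw [← closure_Ioo hab.ne, ← closure_Ioo hd.ne]
    exact MapsTo.closure (fun x hx => (hshift x hx).1) (by fun_prop)
  have heq : EqOn ψ (fun x => φ (x + c)) (Icc a b) := by
    refine EqOn.of_subset_closure (s := Ioo a b) (fun x hx => (hshift x hx).2)
      (hψc.mono (Icc_subset_Icc ha.1 hb.2)) (hφc.comp (by fun_prop) hmaps)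
      Ioo_subset_Icc_self (closure_Ioo hab.ne).ge
  have haeq : a + c = 0 := by
    have hm := hmaps (left_mem_Icc.2 hab.le)
    have hv : φ (a + c) = 0 := (heq (left_mem_Icc.2 hab.le)).symm.trans hψa
    by_contra hne
    rcases eq_or_lt_of_le hm.2 with h | h
    · simp only at h
      rw [h, hφd] at hv
      exact hQ.ne' hv
    · exact (hφmem _ ⟨lt_of_le_of_ne hm.1 (Ne.symm hne), h⟩).1.ne' hv
  have hbeq : b + c = d := by
    have hm := hmaps (right_mem_Icc.2 hab.le)
    have hv : φ (b + c) = Q := (heq (right_mem_Icc.2 hab.le)).symm.trans hψb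
    by_contra hne
    rcases eq_or_lt_of_le hm.1 with h | h
    · simp only at h
      rw [← h, hφ0] at hv
      exact hQ.ne hv
    · exact (hφmem _ ⟨h, lt_of_le_of_ne hm.2 hne⟩).2.ne hv
  have hc0 : c = 0 := by linarith [ha.1, hb.2]
  have ha0 : a = 0 := by linarith
  have hbd : b = d := by linarith
  intro x hx
  have := heq (show x ∈ Icc a b by rwa [ha0, hbd])
  simpa [hc0] using this

/-- The potential `F` built from the cubic profile is `C¹` on `(0,Q)`, continuous, nonnegative and
positive on `(0,Q)`. -/
lemma cubic_potential_properties {Q : ℝ} (hQ : 0 < Q) {κ f F : ℝ → ℝ}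
    (hκ : ∀ t ∈ Icc (0 : ℝ) 1, κ (Q * (3 * t ^ 2 - 2 * t ^ 3)) = t)
    (hf : ∀ s : ℝ, f s = 6 * Q * (1 - 2 * κ s))
    (hF : ∀ t : ℝ, F t = ∫ s in (0 : ℝ)..t, indicator (Icc 0 Q) f s) :
    Continuous F ∧ (∀ s ∈ Ioo 0 Q, HasDerivAt F (f s) s) ∧ (∀ s, 0 ≤ F s) ∧
      ∀ s ∈ Ioo 0 Q, 0 < F s := by
  set P : ℝ → ℝ := fun t => Q * (3 * t ^ 2 - 2 * t ^ 3) with hP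
  have hPc : Continuous P := by fun_prop
  have hP0 : P 0 = 0 := by simp [hP]
  have hP1 : P 1 = Q := by simp [hP]; norm_num
  have hP' (t : ℝ) : HasDerivAt P (6 * Q * t * (1 - t)) t := by
    have h := (((hasDerivAt_pow 2 t).const_mul 3).sub ((hasDerivAt_pow 3 t).const_mul 2)).const_mul Q
    convert! h using 1
    push_cast
    ring
  have hPmono : StrictMonoOn P (Icc 0 1) := by
    refine strictMonoOn_of_deriv_pos (convex_Icc 0 1) hPc.continuousOn fun t ht => ?_
    rw [interior_Icc] at ht
    rw [(hP' t).deriv]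
    have := ht.1
    have : 0 < 1 - t := by linarith [ht.2]
    positivity
  have hsurj : ∀ s ∈ Icc 0 Q, ∃ t ∈ Icc (0 : ℝ) 1, P t = s := by
    intro s hs
    exact intermediate_value_Icc zero_le_one hPc.continuousOn (by rwa [hP0, hP1])
  have hsurj' : ∀ s ∈ Ioo 0 Q, ∃ t ∈ Ioo (0 : ℝ) 1, P t = s := by
    intro s hs
    exact intermediate_value_Ioo zero_le_one hPc.continuousOn (by rwa [hP0, hP1])
  have hκmono : StrictMonoOn κ (Icc 0 Q) := by
    intro s hs s' hs' hss
    obtain ⟨t, ht, rfl⟩ := hsurj s hs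
    obtain ⟨t', ht', rfl⟩ := hsurj s' hs'
    rw [hκ t ht, hκ t' ht']
    exact (hPmono.lt_iff_lt ht ht').1 hss
  have hκc : ∀ s ∈ Ioo 0 Q, ContinuousAt κ s := by
    intro s hs
    obtain ⟨t, ht, rfl⟩ := hsurj' s hs
    refine hκmono.continuousAt_of_image_mem_nhds (Icc_mem_nhds hs.1 hs.2) ?_
    rw [hκ t (Ioo_subset_Icc_self ht)]
    refine Filter.mem_of_superset (Icc_mem_nhds ht.1 ht.2) fun r hr => ⟨P r, ?_, hκ r hr⟩
    refine ⟨?_, ?_⟩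
    · rw [← hP0]
      exact hPmono.monotoneOn (left_mem_Icc.2 zero_le_one) hr hr.1
    · rw [← hP1]
      exact hPmono.monotoneOn hr (right_mem_Icc.2 zero_le_one) hr.2
  have hfanti : AntitoneOn f (Icc 0 Q) := by
    intro s hs s' hs' hss
    rw [hf, hf]
    have := hκmono.monotoneOn hs hs' hss
    gcongr
  have hfint : Integrable (indicator (Icc 0 Q) f) := by
    rw [integrable_indicator_iff measurableSet_Icc]
    exact hfanti.integrableOn_isCompact isCompact_Icc
  have hFeq : F = fun t => ∫ s in (0 : ℝ)..t, indicator (Icc 0 Q) f s := funext hF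
  have hFc : Continuous F := by
    rw [hFeq]
    exact intervalIntegral.continuous_primitive (fun a b => hfint.intervalIntegrable) 0
  have hF' : ∀ s ∈ Ioo 0 Q, HasDerivAt F (f s) s := by
    intro s hs
    have hev : indicator (Icc 0 Q) f =ᶠ[nhds s] f := by
      filter_upwards [Icc_mem_nhds hs.1 hs.2] with r hr
      exact indicator_of_mem hr f
    have hfc : ContinuousAt f s := by
      rw [show f = fun s => 6 * Q * (1 - 2 * κ s) from funext hf]
      have := hκc s hs
      fun_prop
    have h := intervalIntegral.integral_hasDerivAt_right
      (hfint.intervalIntegrable (a := 0) (b := s))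
      hfint.aestronglyMeasurable.stronglyMeasurableAtFilter (hfc.congr hev.symm)
    rwa [hev.eq_of_nhds, ← hFeq] at h
  have hF0 : F 0 = 0 := by simp [hF]
  have hFP : ∀ t ∈ Icc (0 : ℝ) 1, F (P t) = 18 * Q ^ 2 * t ^ 2 * (1 - t) ^ 2 := by
    have hPmem : ∀ t ∈ Ioo (0 : ℝ) 1, P t ∈ Ioo 0 Q := by
      intro t ht
      have h := Ioo_subset_Icc_self ht
      refine ⟨?_, ?_⟩
      · rw [← hP0]
        exact hPmono (left_mem_Icc.2 zero_le_one) h ht.1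
      · rw [← hP1]
        exact hPmono h (right_mem_Icc.2 zero_le_one) ht.2
    set h : ℝ → ℝ := fun t => F (P t) - 18 * Q ^ 2 * t ^ 2 * (1 - t) ^ 2 with hh
    have hhc : Continuous h := by fun_prop
    have hh' : ∀ t ∈ Ioo (0 : ℝ) 1, HasDerivAt h 0 t := by
      intro t ht
      have h1 := (hF' (P t) (hPmem t ht)).comp t (hP' t)
      have h2 : HasDerivAt (fun t : ℝ => 18 * Q ^ 2 * t ^ 2 * (1 - t) ^ 2)
          (18 * Q ^ 2 * (2 * t) * (1 - t) ^ 2 + 18 * Q ^ 2 * t ^ 2 * (2 * (1 - t) * (-1))) t := by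
        have e1 := (hasDerivAt_pow 2 t).const_mul (18 * Q ^ 2)
        have e2 := ((hasDerivAt_id t).const_sub 1).pow 2
        convert! e1.mul e2 using 1
        simp
      have h3 := h1.sub h2
      convert! h3 using 1
      rw [hf, hκ t (Ioo_subset_Icc_self ht)]
      ring
    have hconst : ∀ t ∈ Icc (0 : ℝ) 1, h t = h 0 := by
      intro t ht
      rcases eq_or_lt_of_le ht.1 with rfl | htp
      · rfl
      by_contra hne
      obtain ⟨c, hc, hc'⟩ := exists_hasDerivAt_eq_slope h (fun _ => 0) htp hhc.continuousOn
        (fun x hx => hh' x ⟨hx.1, hx.2.trans_le ht.2⟩)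
      have := div_ne_zero (sub_ne_zero.2 hne) (sub_pos.2 htp).ne'
      exact this hc'.symm
    intro t ht
    have := hconst t ht
    simp only [hh, hP0, hF0] at this
    linarith
  have hFQ : F Q = 0 := by
    rw [← hP1, hFP 1 (right_mem_Icc.2 zero_le_one)]
    ring
  refine ⟨hFc, hF', fun s => ?_, fun s hs => ?_⟩
  · rcases lt_or_ge s 0 with hs | hs
    · rw [hF, intervalIntegral.integral_symm, intervalIntegral.integral_of_le hs.le,
        integral_Ioc_eq_integral_Ioo, setIntegral_eq_zero_of_forall_eq_zero, neg_zero]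
      exact fun x hx => indicator_of_notMem (fun h => hx.2.not_ge h.1) f
    rcases le_or_gt s Q with hsQ | hsQ
    · obtain ⟨t, ht, rfl⟩ := hsurj s ⟨hs, hsQ⟩
      rw [hFP t ht]
      positivity
    · rw [hF, ← intervalIntegral.integral_add_adjacent_intervals (b := Q)
        hfint.intervalIntegrable hfint.intervalIntegrable, ← hF, hFQ, zero_add,
        intervalIntegral.integral_of_le hsQ.le, setIntegral_eq_zero_of_forall_eq_zero]
      exact fun x hx => indicator_of_notMem (fun h => hx.1.not_ge h.2) f
  · obtain ⟨t, ht, rfl⟩ := hsurj' s hs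
    rw [hFP t (Ioo_subset_Icc_self ht)]
    have := ht.1
    have : 0 < 1 - t := by linarith [ht.2]
    positivity

/-- First integral: a solution of the boundary value problem solves `φ' = √(2 (F(φ) + E))` for
some `E ≥ 0`. -/
lemma IsBVPSol.exists_first_integral {Q d : ℝ} {f F φ : ℝ → ℝ} (hQ : 0 < Q) (hd : 0 < d)
    (hφ : IsBVPSol Q f d φ) (hFc : Continuous F) (hF' : ∀ s ∈ Ioo 0 Q, HasDerivAt F (f s) s)
    (hF0 : F 0 = 0) (hFpos : ∀ s ∈ Ioo 0 Q, 0 < F s) :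
    ∃ E, 0 ≤ E ∧ ∀ x ∈ Ioo 0 d, HasDerivAt φ (√(2 * (F (φ x) + E))) x := by
  obtain ⟨hC1, hC2, hode, hφ0, hφd, hmem⟩ := hφ
  have hφc := hC1.continuousOn
  have hdiff : ∀ x ∈ Ioo 0 d, HasDerivAt φ (deriv φ x) x := fun x hx =>
    ((hC2.differentiableOn (by norm_num)).differentiableAt (isOpen_Ioo.mem_nhds hx)).hasDerivAt
  have hC1' : ContDiffOn ℝ 1 (deriv φ) (Ioo 0 d) :=
    hC2.deriv_of_isOpen isOpen_Ioo (by norm_num)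
  have hdiff' : ∀ x ∈ Ioo 0 d, HasDerivAt (deriv φ) (f (φ x)) x := by
    intro x hx
    rw [← hode x hx]
    exact ((hC1'.differentiableOn (by norm_num)).differentiableAt
      (isOpen_Ioo.mem_nhds hx)).hasDerivAt
  have hder : ∀ x ∈ Ioo 0 d, HasDerivAt (fun x => deriv φ x ^ 2 / 2 - F (φ x)) 0 x := by
    intro x hx
    have h := (((hdiff' x hx).pow 2).div_const 2).sub
      ((hF' (φ x) (hmem x hx)).comp x (hdiff x hx))
    convert! h using 1
    simp
    ring
  obtain ⟨E, hE⟩ := isOpen_Ioo.exists_is_const_of_deriv_eq_zero isPreconnected_Ioo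
    (fun x hx => (hder x hx).differentiableAt.differentiableWithinAt)
    (fun x hx => (hder x hx).deriv)
  have hE0 : 0 ≤ E := by
    have hcont : ContinuousWithinAt (fun x => -F (φ x)) (Icc 0 d) 0 :=
      (hFc.comp_continuousOn hφc).neg 0 (left_mem_Icc.2 hd.le)
    have hlim : Filter.Tendsto (fun x => -F (φ x)) (nhdsWithin 0 (Ioo 0 d)) (nhds 0) := by
      have := hcont.mono Ioo_subset_Icc_self
      simpa [ContinuousWithinAt, hφ0, hF0] using this
    have : (nhdsWithin (0 : ℝ) (Ioo 0 d)).NeBot := left_nhdsWithin_Ioo_neBot hd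
    refine le_of_tendsto hlim ?_
    filter_upwards [self_mem_nhdsWithin] with x hx
    have := hE x hx
    nlinarith [sq_nonneg (deriv φ x)]
  have hsq : ∀ x ∈ Ioo 0 d, deriv φ x ^ 2 = 2 * (F (φ x) + E) := by
    intro x hx
    have := hE x hx
    linarith
  have hne : ∀ x ∈ Ioo 0 d, deriv φ x ≠ 0 := by
    intro x hx h
    have h1 := hsq x hx
    have h2 := hFpos _ (hmem x hx)
    rw [h] at h1
    linarith
  have hpos : ∀ x ∈ Ioo 0 d, 0 < deriv φ x := by
    obtain ⟨c, hc, hc'⟩ := exists_deriv_eq_slope φ hd hφc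
      (hC2.differentiableOn (by norm_num))
    have hcpos : 0 < deriv φ c := by
      rw [hc', hφ0, hφd, sub_zero, sub_zero]
      positivity
    intro x hx
    by_contra! hx0
    obtain ⟨y, hy, hy0⟩ := isPreconnected_Ioo.intermediate_value hx hc hC1'.continuousOn
      (show (0 : ℝ) ∈ Icc (deriv φ x) (deriv φ c) from ⟨hx0, hcpos.le⟩)
    exact hne y hy hy0
  refine ⟨E, hE0, fun x hx => ?_⟩
  rw [← hsq x hx, Real.sqrt_sq (hpos x hx).le]
  exact hdiff x hx

/-- Completing the square: the energy equals a constant plus the defect in `ψ' = G(ψ)`, where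
`G = √(2 (F + E))`. -/
lemma UdRep.Jd_eq {Q d E : ℝ} {F ψ g : ℝ → ℝ} (hQ : 0 < Q) (hd : 0 < d) (hFc : Continuous F)
    (hF0 : ∀ s, 0 ≤ F s) (hE : 0 ≤ E) (h : UdRep Q d ψ g) :
    ContinuousOn ψ (Icc 0 d) ∧
    IntervalIntegrable (fun s => (g s - √(2 * (F (ψ s) + E))) ^ 2) volume 0 d ∧
    Jd F d ψ g = (∫ y in (0 : ℝ)..Q, √(2 * (F y + E))) - d * E
      + (∫ s in (0 : ℝ)..d, (g s - √(2 * (F (ψ s) + E))) ^ 2) / 2 := by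
  obtain ⟨hg2, hrep, hψd⟩ := h
  have hdmem : d ∈ Icc 0 d := right_mem_Icc.2 hd.le
  have hgd : ∫ s in (0 : ℝ)..d, g s = Q := by rw [← hrep d hdmem, hψd]
  have hg : IntervalIntegrable g volume 0 d := by
    by_contra hn
    rw [intervalIntegral.integral_undef hn] at hgd
    exact hQ.ne hgd
  have hψc : ContinuousOn ψ (Icc 0 d) := by
    have := intervalIntegral.continuousOn_primitive_interval' hg left_mem_uIcc
    rw [uIcc_of_le hd.le] at this
    exact this.congr hrep
  have hψcu : ContinuousOn ψ (uIcc 0 d) := by rwa [uIcc_of_le hd.le]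
  set G : ℝ → ℝ := fun y => √(2 * (F y + E)) with hG
  have hGc : Continuous G := by fun_prop
  have hGψ : ContinuousOn (fun s => G (ψ s)) (uIcc 0 d) := hGc.comp_continuousOn hψcu
  have hGsq (y : ℝ) : G y ^ 2 = 2 * (F y + E) := Real.sq_sqrt (by linarith [hF0 y])
  have hg2i : IntervalIntegrable (fun s => g s ^ 2) volume 0 d :=
    (intervalIntegrable_iff_integrableOn_Icc_of_le hd.le).2 hg2
  have hFψ : IntervalIntegrable (fun s => F (ψ s)) volume 0 d :=
    (hFc.comp_continuousOn hψcu).intervalIntegrable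
  have hGg : IntervalIntegrable (fun s => G (ψ s) * g s) volume 0 d := hg.continuousOn_mul hGψ
  have hJ : IntervalIntegrable (fun s => g s ^ 2 / 2 + F (ψ s)) volume 0 d :=
    (hg2i.div_const 2).add hFψ
  have hpt (s : ℝ) : (g s - G (ψ s)) ^ 2
      = 2 * ((g s ^ 2 / 2 + F (ψ s)) + E - G (ψ s) * g s) := by
    have := hGsq (ψ s)
    linear_combination this
  have hcal : ∫ s in (0 : ℝ)..d, G (ψ s) * g s = ∫ y in (0 : ℝ)..Q, G y := by
    rw [← hgd, ← integral_comp_integral_mul hGc hg]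
    refine intervalIntegral.integral_congr fun x hx => ?_
    rw [uIcc_of_le hd.le] at hx
    simp only [hrep x hx]
  refine ⟨hψc, ?_, ?_⟩
  · change IntervalIntegrable (fun s => (g s - G (ψ s)) ^ 2) volume 0 d
    simp only [hpt]
    exact ((hJ.add intervalIntegrable_const).sub hGg).const_mul 2
  · change _ = (∫ y in (0 : ℝ)..Q, G y) - d * E + (∫ s in (0 : ℝ)..d, (g s - G (ψ s)) ^ 2) / 2
    simp only [hpt]
    rw [intervalIntegral.integral_const_mul,
      intervalIntegral.integral_sub (hJ.add intervalIntegrable_const) hGg,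
      intervalIntegral.integral_add hJ intervalIntegrable_const, hcal,
      intervalIntegral.integral_const, Jd, smul_eq_mul]
    ring

/-- `φ̄_d` belongs to `U_d` and is the unique minimizer of the energy `J_d` over `U_d`. -/
theorem stmt10
    (Q : ℝ) (hQ : 0 < Q)
    (κ : ℝ → ℝ) (hκ : ∀ t ∈ Set.Icc (0 : ℝ) 1, κ (Q * (3 * t ^ 2 - 2 * t ^ 3)) = t)
    (f : ℝ → ℝ) (hf : ∀ s : ℝ, f s = 6 * Q * (1 - 2 * κ s))
    (F : ℝ → ℝ) (hF : ∀ t : ℝ, F t = ∫ s in (0 : ℝ)..t, Set.indicator (Set.Icc 0 Q) f s)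
    (d : ℝ) (hd : d ∈ Set.Ioc (0 : ℝ) 1)
    (φd : ℝ → ℝ) (hφd : IsBVPSol Q f d φd) :
    ∃ gφ : ℝ → ℝ, UdRep Q d φd gφ ∧
      ∀ ψ g : ℝ → ℝ, UdRep Q d ψ g →
        Jd F d φd gφ ≤ Jd F d ψ g ∧
        (Jd F d ψ g = Jd F d φd gφ → Set.EqOn ψ φd (Set.Icc 0 d)) := by
  have hd0 : 0 < d := hd.1
  obtain ⟨hFc, hF', hFnn, hFpos⟩ := cubic_potential_properties hQ hκ hf hF
  obtain ⟨E, hE, hφ'⟩ := hφd.exists_first_integral hQ hd0 hFc hF' (by simp [hF]) hFpos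
  obtain ⟨hC1, -, -, hφ0, hφQ, hmem⟩ := hφd
  have hφc := hC1.continuousOn
  have hGc : Continuous fun y => √(2 * (F y + E)) := by fun_prop
  have hGφ : ContinuousOn (fun s => √(2 * (F (φd s) + E))) (Icc 0 d) :=
    hGc.comp_continuousOn hφc
  have hU : UdRep Q d φd fun s => √(2 * (F (φd s) + E)) := by
    refine ⟨(hGφ.pow 2).integrableOn_Icc, fun x hx => ?_, hφQ⟩
    have hsub : Icc 0 x ⊆ Icc 0 d := Icc_subset_Icc_right hx.2
    rw [intervalIntegral.integral_eq_sub_of_hasDerivAt_of_le hx.1 (hφc.mono hsub)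
      (fun y hy => hφ' y ⟨hy.1, hy.2.trans_le hx.2⟩), hφ0, sub_zero]
    refine ContinuousOn.intervalIntegrable (hGφ.mono ?_)
    rwa [uIcc_of_le hx.1]
  obtain ⟨-, -, hJφ⟩ := hU.Jd_eq hQ hd0 hFc hFnn hE
  simp only [sub_self, ne_eq, OfNat.ofNat_ne_zero, not_false_eq_true, zero_pow,
    intervalIntegral.integral_zero, zero_div, add_zero] at hJφ
  refine ⟨_, hU, fun ψ g hψ => ?_⟩
  obtain ⟨hψc, hdef, hJψ⟩ := hψ.Jd_eq hQ hd0 hFc hFnn hE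
  have hnn : 0 ≤ ∫ s in (0 : ℝ)..d, (g s - √(2 * (F (ψ s) + E))) ^ 2 :=
    intervalIntegral.integral_nonneg hd0.le fun s _ => sq_nonneg _
  refine ⟨by rw [hJφ, hJψ]; linarith, fun heq => ?_⟩
  have hzero : ∫ s in (0 : ℝ)..d, (g s - √(2 * (F (ψ s) + E))) ^ 2 = 0 := by
    rw [hJφ, hJψ] at heq
    linarith
  have hae : ∀ᵐ s ∂volume.restrict (Ioc 0 d), g s = √(2 * (F (ψ s) + E)) := by
    rw [intervalIntegral.integral_eq_zero_iff_of_le_of_nonneg_ae hd0.le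
      (Filter.Eventually.of_forall fun s => sq_nonneg _) hdef] at hzero
    filter_upwards [hzero] with s hs
    exact sub_eq_zero.1 (pow_eq_zero_iff two_ne_zero |>.1 hs)
  have hGψ : ContinuousOn (fun s => √(2 * (F (ψ s) + E))) (Icc 0 d) :=
    hGc.comp_continuousOn hψc
  have hrep : ∀ x ∈ Icc 0 d, ψ x = ∫ s in (0 : ℝ)..x, √(2 * (F (ψ s) + E)) := by
    intro x hx
    rw [hψ.2.1 x hx, intervalIntegral.integral_of_le hx.1, intervalIntegral.integral_of_le hx.1]
    exact integral_congr_ae (ae_restrict_of_ae_restrict_of_subset (Ioc_subset_Ioc_right hx.2) hae)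
  refine eqOn_of_hasDerivAt_autonomous hQ hd0 hGc (fun y => Real.sqrt_nonneg _)
    (fun y hy => Real.sqrt_pos.2 (by linarith [hFpos y hy])) hφc hφ' hφ0 hφQ hmem hψc
    (fun x hx => ?_) (by simp [hrep 0 (left_mem_Icc.2 hd0.le)]) hψ.2.2
  have hev : ψ =ᶠ[nhds x] fun x => ∫ s in (0 : ℝ)..x, √(2 * (F (ψ s) + E)) := by
    filter_upwards [Icc_mem_nhds hx.1 hx.2] with y hy using hrep y hy
  refine HasDerivAt.congr_of_eventuallyEq ?_ hev
  refine intervalIntegral.integral_hasDerivAt_right ?_ ?_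
    (hGψ.continuousAt (Icc_mem_nhds hx.1 hx.2))
  · refine ContinuousOn.intervalIntegrable (hGψ.mono ?_)
    rw [uIcc_of_le hx.1.le]
    exact Icc_subset_Icc_right hx.2.le
  · exact (hGψ.mono Ioo_subset_Icc_self).stronglyMeasurableAtFilter isOpen_Ioo x hx
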